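/- The group B = ⟨a, d, s | asa⁻¹s⁻², dsd⁻¹s⁻²⟩ satisfies CL_B(n) ≼ n; that is, there is a constant C > 0 such that whenever words u, v over {a,d,s}^{±1} with |u| + |v| ≤ n represent conjugate elements of B, there is a word w with |w| ≤ C·n + C and wuw⁻¹ = v in B. -/

import Mathlib

/-!
`B` is an HNN extension of `⟨s⟩ ≅ ℤ` with stable letters `a` and `d`, so it acts on a Bass–Serre
tree whose vertices are the cosets `g⟨s⟩`. Write `S = ⟨s⟩`, and let `n` bound the lengths of the
words `u` and `v`.

The tree is encoded by normal forms: the coset `gS` is a reduced stack of syllables `stk g`, on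
which right multiplication by a generator pushes or pops at most one syllable. That this is a
well-defined action of `B` (`actNF`) replaces Britton's lemma.

Among all conjugators between cyclic permutations of `u` and of `v`, take one, `w`, with the fewest
stable letters, conjugating `u'` to `v'`. It spans a shortest bridge in the tree between a
`u'`-invariant subtree and a translate of a `v'`-invariant one. Either the bridge is a single
vertex, so that `w` is a power of `s`, or it is unique, hence fixed, and both `u'` and `v'` are
powers of `s` (`conj_rot`).

Both cases are settled by the affine action on `ℚ` in which `a`, `d` double and `s` translates
by `1`; a word of length `n` acts by `x ↦ 2 ^ h * x + c` with `|c| ≤ 2 ^ n` (`word_aff`).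
* If `s ^ p` conjugates `u'` to `v'`, then `p` can be chosen with `|p| ≤ 2 ^ (n + 2)`: for `h ≠ 0`
  it is determined by `p * (1 - 2 ^ h)`, and for `h = 0` the element `s ^ 2 ^ n` commutes with the
  words, so `p` matters only modulo `2 ^ n` (`bound_p`). Since `S` is exponentially distorted,
  `s ^ p` has length `O(n)` (`short_s`).
* If `u' = s ^ k` and `v' = s ^ l`, then `k = 2 ^ h * l` with `|k|, |l| ≤ 2 ^ n`, so a power of `a`
  of length at most `n` conjugates one to the other (`bound_ell`).
-/

namespace AnnDehn

/-- A word over the alphabet `X`: a list of letters together with exponents `±1`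
(`true` = the letter itself, `false` = its inverse). -/
abbrev Word (X : Type*) := List (X × Bool)

/-- `IsProdOfConjRels R k g` : the free group element `g` is freely equal to a product
of `k` conjugates of relators in `R` or of their inverses. -/
def IsProdOfConjRels {X : Type*} (R : Set (FreeGroup X)) (k : ℕ) (g : FreeGroup X) : Prop :=
  ∃ (w r : Fin k → FreeGroup X) (ε : Fin k → ℤ),
    (∀ i, r i ∈ R) ∧ (∀ i, ε i = 1 ∨ ε i = -1) ∧
      g = (List.ofFn (fun i => w i * (r i) ^ (ε i) * (w i)⁻¹)).prod

/-- The (combinatorial) area of a free group element with respect to the relators `R`: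
the least number of conjugates of relators (or their inverses) whose product is freely
equal to `g`. -/
noncomputable def area {X : Type*} (R : Set (FreeGroup X)) (g : FreeGroup X) : ℕ :=
  sInf {k | IsProdOfConjRels R k g}

/-- The canonical projection from the free group onto the presented group `⟨X ∣ R⟩`. -/
def proj {X : Type*} (R : Set (FreeGroup X)) : FreeGroup X →* PresentedGroup R :=
  PresentedGroup.mk R

/-- The Dehn function of the presentation `⟨X ∣ R⟩`:
`dehn R n = max {area w : |w| ≤ n, w = 1 in ⟨X ∣ R⟩}`. -/
noncomputable def dehn {X : Type*} (R : Set (FreeGroup X)) (n : ℕ) : ℕ :=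
  sSup {A | ∃ w : Word X, w.length ≤ n ∧ proj R (FreeGroup.mk w) = 1 ∧
      A = area R (FreeGroup.mk w)}

/-- The conjugator length function of a group `G` marked by a map `φ` from a free group:
the least `N` such that any two words `u`, `v` of total length at most `n` representing
conjugate elements of `G` admit a conjugating word of length at most `N`. -/
noncomputable def conjLength {X G : Type*} [Group G] (φ : FreeGroup X →* G) (n : ℕ) : ℕ :=
  sInf {N | ∀ u v : Word X, u.length + v.length ≤ n →
      IsConj (φ (FreeGroup.mk u)) (φ (FreeGroup.mk v)) →
      ∃ w : Word X, w.length ≤ N ∧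
        φ (FreeGroup.mk w) * φ (FreeGroup.mk u) * (φ (FreeGroup.mk w))⁻¹ = φ (FreeGroup.mk v)}

/-- The conjugator length function of the presentation `⟨X ∣ R⟩`. -/
noncomputable def CL {X : Type*} (R : Set (FreeGroup X)) (n : ℕ) : ℕ :=
  conjLength (proj R) n

/-- `annPair R u v` : the annular area of the pair `u`, `v`, i.e. the minimum of
`area (γ * u * γ⁻¹ * v⁻¹)` over all conjugators `γ` with `γuγ⁻¹ = v` in `⟨X ∣ R⟩`. -/
noncomputable def annPair {X : Type*} (R : Set (FreeGroup X)) (u v : FreeGroup X) : ℕ :=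
  sInf {A | ∃ γ : FreeGroup X, proj R (γ * u * γ⁻¹) = proj R v ∧
      A = area R (γ * u * γ⁻¹ * v⁻¹)}

/-- The annular Dehn function of the presentation `⟨X ∣ R⟩`. -/
noncomputable def ann {X : Type*} (R : Set (FreeGroup X)) (n : ℕ) : ℕ :=
  sSup {A | ∃ u v : Word X, u.length + v.length ≤ n ∧
      IsConj (proj R (FreeGroup.mk u)) (proj R (FreeGroup.mk v)) ∧
      A = annPair R (FreeGroup.mk u) (FreeGroup.mk v)}

/-- `f ≼ g` : there is a constant `C > 0` with `f n ≤ C * g (C*n + n) + C*n + C`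
for all `n`. -/
def Dominates (f g : ℕ → ℕ) : Prop :=
  ∃ C : ℕ, 0 < C ∧ ∀ n, f n ≤ C * g (C * n + n) + C * n + C

/-- `f ≃ g` : `f ≼ g` and `g ≼ f`. -/
def Equivalent (f g : ℕ → ℕ) : Prop := Dominates f g ∧ Dominates g f

/-- The relators of `B = ⟨a, d, s ∣ asa⁻¹s⁻², dsd⁻¹s⁻²⟩`, with `a = 0`, `d = 1`, `s = 2`. -/
def bRels : Set (FreeGroup (Fin 3)) :=
  {FreeGroup.of (0 : Fin 3) * FreeGroup.of (2 : Fin 3) * (FreeGroup.of (0 : Fin 3))⁻¹ *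
      ((FreeGroup.of (2 : Fin 3)) ^ 2)⁻¹,
    FreeGroup.of (1 : Fin 3) * FreeGroup.of (2 : Fin 3) * (FreeGroup.of (1 : Fin 3))⁻¹ *
      ((FreeGroup.of (2 : Fin 3)) ^ 2)⁻¹}

/-- The image in `B` of a word. -/
def ev (w : Word (Fin 3)) : PresentedGroup bRels := proj bRels (FreeGroup.mk w)

/-- The generator `s`. -/
def sG : PresentedGroup bRels := PresentedGroup.of 2

/-- The index of a stable letter: `true` names `a`, `false` names `d`. -/
def tl (b : Bool) : Fin 3 := if b then 0 else 1

/-- The stable letters `a`, `d` as elements of `B`. -/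
def tG (b : Bool) : PresentedGroup bRels := PresentedGroup.of (tl b)

lemma ev_nil : ev [] = 1 := by
  show proj bRels 1 = 1
  exact map_one _

lemma ev_append (u v : Word (Fin 3)) : ev (u ++ v) = ev u * ev v := by
  unfold ev
  rw [← FreeGroup.mul_mk, map_mul]

lemma ev_cons (y : Fin 3 × Bool) (v : Word (Fin 3)) : ev (y :: v) = ev [y] * ev v := by
  rw [← ev_append]; rfl

lemma ev_surj (g : PresentedGroup bRels) : ∃ w, ev w = g := by
  obtain ⟨x, rfl⟩ := PresentedGroup.mk_surjective bRels g
  refine ⟨x.toWord, ?_⟩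
  unfold ev proj
  rw [FreeGroup.mk_toWord]

lemma ev_inv (w : Word (Fin 3)) : ev (FreeGroup.invRev w) = (ev w)⁻¹ := by
  unfold ev
  rw [← FreeGroup.inv_mk, map_inv]

lemma ev_single (i : Fin 3) : ev [(i, true)] = PresentedGroup.of i := rfl

lemma ev_single_false (i : Fin 3) : ev [(i, false)] = (PresentedGroup.of i)⁻¹ := by
  rw [← ev_single, ← ev_inv]; rfl

lemma ev_s : ev [(2, true)] = sG := rfl
lemma ev_s' : ev [(2, false)] = sG⁻¹ := ev_single_false 2
lemma ev_t (b : Bool) : ev [(tl b, true)] = tG b := rfl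
lemma ev_t' (b : Bool) : ev [(tl b, false)] = (tG b)⁻¹ := ev_single_false _

lemma letter_cases {P : Fin 3 × Bool → Prop} (h1 : P (2, true)) (h2 : P (2, false))
    (h3 : ∀ b, P (tl b, true)) (h4 : ∀ b, P (tl b, false)) (y : Fin 3 × Bool) : P y := by
  obtain ⟨i, b⟩ := y
  fin_cases i <;> cases b
  · exact h4 true
  · exact h3 true
  · exact h4 false
  · exact h3 false
  · exact h2
  · exact h1

lemma tG_sG (b : Bool) : tG b * sG = sG ^ 2 * tG b := by
  have h : PresentedGroup.mk bRels (FreeGroup.of (tl b) * FreeGroup.of (2 : Fin 3) *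
      (FreeGroup.of (tl b))⁻¹ * ((FreeGroup.of (2 : Fin 3)) ^ 2)⁻¹) = 1 := by
    apply PresentedGroup.one_of_mem
    cases b
    · right; rfl
    · left; rfl
  simp only [map_mul, map_inv, map_pow] at h
  have h2 : tG b * sG * (tG b)⁻¹ * (sG ^ 2)⁻¹ = 1 := h
  rw [mul_inv_eq_one, mul_inv_eq_iff_eq_mul] at h2
  exact h2

lemma tG_zpow (b : Bool) (k : ℤ) : tG b * sG ^ k = sG ^ (2 * k) * tG b := by
  have h : tG b * sG * (tG b)⁻¹ = sG ^ (2 : ℤ) := by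
    rw [tG_sG]; group
  rw [← mul_inv_eq_iff_eq_mul, ← conj_zpow, h, ← zpow_mul]

/-! ### Normal forms -/

/-- A syllable of a normal form: `neg b` stands for `t⁻¹` and `pos b r` for `sʳ t`
(with `r` read as `0` or `1`), where `t` is the stable letter named by `b`. -/
inductive Syl
  | neg (b : Bool)
  | pos (b : Bool) (r : Bool)

/-- `Ok x y` : the syllable `x` may follow the syllable `y` without creating a pinch. -/
def Ok : Syl → Syl → Prop
  | .neg b, .pos b' _ => b ≠ b'
  | .pos b r, .neg b' => b = b' → r = true
  | _, _ => True

/-- A stack of syllables, last syllable first, is reduced if it contains no pinch. -/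
def Red : List Syl → Prop
  | [] => True
  | [_] => True
  | x :: y :: L => Ok x y ∧ Red (y :: L)

lemma Red.tail {x : Syl} {L : List Syl} (h : Red (x :: L)) : Red L := by
  cases L with
  | nil => trivial
  | cons y L => exact h.2

/-- Normal forms `y₁ ⋯ yₘ sᵏ`: a reduced stack of syllables and the exponent `k`. -/
abbrev NF := {p : List Syl × ℤ // Red p.1}

/-- A Boolean read as an exponent `0` or `1`. -/
def bit (r : Bool) : ℤ := if r then 1 else 0

/-- The parity of an integer, `true` meaning odd. -/
def par (k : ℤ) : Bool := decide (k % 2 = 1)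

lemma bit_par (k : ℤ) : bit (par k) + 2 * (k / 2) = k := by
  unfold bit par
  by_cases h : k % 2 = 1
  · simp [h]; omega
  · simp [h]; omega

/-- Right multiplication of a normal form by the stable letter named by `b`. -/
def mulT (b : Bool) : List Syl × ℤ → List Syl × ℤ
  | (.neg b' :: L, k) =>
      if b = b' ∧ par k = false then (L, k / 2)
      else (.pos b (par k) :: .neg b' :: L, k / 2)
  | (L, k) => (.pos b (par k) :: L, k / 2)

/-- Right multiplication of a normal form by the inverse of the stable letter named by `b`. -/
def mulT' (b : Bool) : List Syl × ℤ → List Syl × ℤ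
  | (.pos b' r :: L, k) =>
      if b = b' then (L, bit r + 2 * k) else (.neg b :: .pos b' r :: L, 2 * k)
  | (L, k) => (.neg b :: L, 2 * k)

lemma mulT_red (b : Bool) (p : List Syl × ℤ) (h : Red p.1) : Red (mulT b p).1 := by
  obtain ⟨L, k⟩ := p
  rcases L with _ | ⟨⟨b'⟩ | ⟨b', r⟩, L⟩
  · trivial
  · simp only [mulT]
    split_ifs with hc
    · exact Red.tail h
    · refine ⟨fun e => ?_, h⟩
      by_contra h3
      exact hc ⟨e, by simpa using h3⟩
  · exact ⟨trivial, h⟩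

lemma mulT'_red (b : Bool) (p : List Syl × ℤ) (h : Red p.1) : Red (mulT' b p).1 := by
  obtain ⟨L, k⟩ := p
  rcases L with _ | ⟨⟨b'⟩ | ⟨b', r⟩, L⟩
  · trivial
  · exact ⟨trivial, h⟩
  · simp only [mulT']
    split_ifs with hc
    · exact Red.tail h
    · exact ⟨hc, h⟩

lemma par_two_mul (k : ℤ) : par (2 * k) = false := by
  simp [par]

lemma par_bit (r : Bool) (k : ℤ) : par (bit r + 2 * k) = r := by
  cases r <;> simp [par, bit]

lemma bit_div (r : Bool) (k : ℤ) : (bit r + 2 * k) / 2 = k := by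
  cases r
  · simp [bit]
  · simp [bit]; omega

lemma mulT'_mulT (b : Bool) (p : List Syl × ℤ) (h : Red p.1) : mulT' b (mulT b p) = p := by
  obtain ⟨L, k⟩ := p
  rcases L with _ | ⟨⟨b'⟩ | ⟨b', r⟩, L⟩
  · simp [mulT, mulT', bit_par]
  · simp only [mulT]
    split_ifs with hc
    · obtain ⟨rfl, hk⟩ := hc
      have h2 : 2 * (k / 2) = k := by
        have := bit_par k
        rw [hk] at this
        simpa [bit] using this
      rcases L with _ | ⟨⟨b'⟩ | ⟨b', r⟩, L⟩
      · simp [mulT', h2]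
      · simp [mulT', h2]
      · have : b ≠ b' := h.1
        simp [mulT', h2, this]
    · simp [mulT', bit_par]
  · simp [mulT, mulT', bit_par]

lemma mulT_mulT' (b : Bool) (p : List Syl × ℤ) (h : Red p.1) : mulT b (mulT' b p) = p := by
  obtain ⟨L, k⟩ := p
  rcases L with _ | ⟨⟨b'⟩ | ⟨b', r⟩, L⟩
  · simp [mulT, mulT', par_two_mul]
  · simp [mulT, mulT', par_two_mul]
  · simp only [mulT']
    split_ifs with hc
    · subst hc
      rcases L with _ | ⟨⟨b'⟩ | ⟨b', r'⟩, L⟩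
      · simp [mulT, par_bit, bit_div]
      · have h1 : b = b' → r = true := h.1
        simp only [mulT, par_bit, bit_div]
        rw [if_neg]
        rintro ⟨e, e2⟩
        rw [h1 e] at e2
        cases e2
      · simp [mulT, par_bit, bit_div]
    · simp [mulT, par_two_mul]

/-- Right multiplication by a stable letter as a permutation of the normal forms. -/
def permT (b : Bool) : Equiv.Perm NF where
  toFun p := ⟨mulT b p.1, mulT_red b p.1 p.2⟩
  invFun p := ⟨mulT' b p.1, mulT'_red b p.1 p.2⟩
  left_inv p := Subtype.ext (mulT'_mulT b p.1 p.2)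
  right_inv p := Subtype.ext (mulT_mulT' b p.1 p.2)

/-- Right multiplication by `s` as a permutation of the normal forms. -/
def permS : Equiv.Perm NF where
  toFun p := ⟨(p.1.1, p.1.2 + 1), p.2⟩
  invFun p := ⟨(p.1.1, p.1.2 - 1), p.2⟩
  left_inv p := by ext <;> simp
  right_inv p := by ext <;> simp

/-- The action of the generators on normal forms. -/
def genPerm (i : Fin 3) : (Equiv.Perm NF)ᵐᵒᵖ :=
  MulOpposite.op (if i = 2 then permS else permT (decide (i = 0)))

lemma permT_permS (b : Bool) (p : NF) : permS (permT b p) = permT b (permS (permS p)) := by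
  obtain ⟨⟨L, k⟩, h⟩ := p
  apply Subtype.ext
  have e1 : par (k + 1 + 1) = par k := by unfold par; congr 1; apply propext; omega
  have e2 : (k + 1 + 1) / 2 = k / 2 + 1 := by omega
  rcases L with _ | ⟨⟨b'⟩ | ⟨b', r⟩, L⟩
  · simp [permS, permT, mulT, e1, e2]
  · simp only [permS, permT, mulT, e1, e2, Equiv.coe_fn_mk]
    split_ifs <;> rfl
  · simp [permS, permT, mulT, e1, e2]

lemma rel_perm (b : Bool) : MulOpposite.op (permT b) * MulOpposite.op permS *
    (MulOpposite.op (permT b))⁻¹ * ((MulOpposite.op permS) ^ 2)⁻¹ = 1 := by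
  rw [mul_inv_eq_one, mul_inv_eq_iff_eq_mul]
  apply MulOpposite.unop_injective
  ext1 p
  simpa [pow_two] using permT_permS b p

/-- The right action of `B` on normal forms, as a homomorphism to the opposite group. -/
def actNF : PresentedGroup bRels →* (Equiv.Perm NF)ᵐᵒᵖ :=
  PresentedGroup.toGroup (f := genPerm) (by
    rintro r (rfl | rfl)
    · simpa [genPerm] using rel_perm true
    · simpa [genPerm] using rel_perm false)

/-- The normal form of an element of `B`. -/
def nf (g : PresentedGroup bRels) : NF := (actNF g).unop ⟨([], 0), trivial⟩

/-- The stack of an element `g`; it encodes the coset `g⟨s⟩`. -/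
def stk (g : PresentedGroup bRels) : List Syl := (nf g).1.1

lemma nf_one : nf 1 = ⟨([], 0), trivial⟩ := by simp [nf]

lemma nf_mul (g h : PresentedGroup bRels) : nf (g * h) = (actNF h).unop (nf g) := by
  simp [nf]

lemma actNF_s : actNF sG = MulOpposite.op permS := by
  simp [actNF, sG, genPerm]

lemma actNF_t (b : Bool) : actNF (tG b) = MulOpposite.op (permT b) := by
  cases b <;> simp [actNF, tG, genPerm, tl]

lemma nf_mul_s (g) : (nf (g * sG)).1 = ((nf g).1.1, (nf g).1.2 + 1) := by
  rw [nf_mul, actNF_s]; rfl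

lemma nf_mul_s' (g) : (nf (g * sG⁻¹)).1 = ((nf g).1.1, (nf g).1.2 - 1) := by
  rw [nf_mul, map_inv, actNF_s]; rfl

lemma nf_mul_t (b g) : (nf (g * tG b)).1 = mulT b (nf g).1 := by
  rw [nf_mul, actNF_t]; rfl

lemma nf_mul_t' (b g) : (nf (g * (tG b)⁻¹)).1 = mulT' b (nf g).1 := by
  rw [nf_mul, map_inv, actNF_t]; rfl

/-- The group element of a syllable. -/
def evSyl : Syl → PresentedGroup bRels
  | .neg b => (tG b)⁻¹
  | .pos b r => sG ^ (bit r) * tG b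

/-- The group element of a stack; the head of the list is the last factor. -/
def evSt : List Syl → PresentedGroup bRels
  | [] => 1
  | c :: L => evSt L * evSyl c

/-- The group element of a normal form. -/
def evNF (p : List Syl × ℤ) : PresentedGroup bRels := evSt p.1 * sG ^ p.2

lemma evNF_push (b : Bool) (L : List Syl) (k : ℤ) :
    evNF (.pos b (par k) :: L, k / 2) = evNF (L, k) * tG b := by
  simp only [evNF, evSt, evSyl, mul_assoc]
  rw [tG_zpow, ← mul_assoc (sG ^ _), ← zpow_add, bit_par]

lemma evNF_push' (b : Bool) (L : List Syl) (k : ℤ) :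
    evNF (.neg b :: L, 2 * k) = evNF (L, k) * (tG b)⁻¹ := by
  simp only [evNF, evSt, evSyl, mul_assoc]
  congr 1
  rw [inv_mul_eq_iff_eq_mul, ← mul_assoc, tG_zpow, mul_inv_cancel_right]

lemma evNF_mulT (b : Bool) (p : List Syl × ℤ) : evNF (mulT b p) = evNF p * tG b := by
  obtain ⟨L, k⟩ := p
  rcases L with _ | ⟨⟨b'⟩ | ⟨b', r⟩, L⟩
  · exact evNF_push b _ k
  · simp only [mulT]
    split_ifs with hc
    · obtain ⟨rfl, hk⟩ := hc
      have h2 : 2 * (k / 2) = k := by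
        have := bit_par k
        rw [hk] at this
        simpa [bit] using this
      have := evNF_push' b L (k / 2)
      rw [h2] at this
      rw [this, inv_mul_cancel_right]
    · exact evNF_push b _ k
  · exact evNF_push b _ k

lemma evNF_mulT' (b : Bool) (p : List Syl × ℤ) : evNF (mulT' b p) = evNF p * (tG b)⁻¹ := by
  obtain ⟨L, k⟩ := p
  rcases L with _ | ⟨⟨b'⟩ | ⟨b', r⟩, L⟩
  · exact evNF_push' b _ k
  · exact evNF_push' b _ k
  · simp only [mulT']
    split_ifs with hc
    · subst hc
      have := evNF_push b L (bit r + 2 * k)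
      rw [par_bit, bit_div] at this
      rw [this, mul_inv_cancel_right]
    · exact evNF_push' b _ k

lemma evNF_nf_mul_letter (y : Fin 3 × Bool) (g) :
    evNF (nf (g * ev [y])).1 = evNF (nf g).1 * ev [y] := by
  refine letter_cases (P := fun y => evNF (nf (g * ev [y])).1 = evNF (nf g).1 * ev [y])
    ?_ ?_ ?_ ?_ y
  · rw [ev_s, nf_mul_s]; simp [evNF, zpow_add_one, mul_assoc]
  · rw [ev_s', nf_mul_s']; simp [evNF, zpow_sub_one, mul_assoc]
  · intro b; rw [ev_t, nf_mul_t, evNF_mulT]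
  · intro b; rw [ev_t', nf_mul_t', evNF_mulT']

lemma evNF_nf (g) : evNF (nf g).1 = g := by
  obtain ⟨w, rfl⟩ := ev_surj g
  induction w using List.reverseRecOn with
  | nil => simp [ev_nil, nf_one, evNF, evSt]
  | append_singleton w y ih => rw [ev_append, evNF_nf_mul_letter, ih]

lemma eq_evSt (g) : ∃ k : ℤ, g = evSt (stk g) * sG ^ k := ⟨(nf g).1.2, (evNF_nf g).symm⟩

lemma stk_one : stk 1 = [] := by simp [stk, nf_one]

/-! ### Stacks along words -/

/-- The number of stable letters in a word. -/
def tc (w : Word (Fin 3)) : ℕ := w.countP (fun y => y.1 ≠ 2)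

lemma tc_append (u v) : tc (u ++ v) = tc u + tc v := by simp [tc]

lemma tc_cons (y v) : tc (y :: v) = tc [y] + tc v := tc_append [y] v

lemma tc_t (b e) : tc [(tl b, e)] = 1 := by
  cases b <;> simp [tc, tl]

/-- One letter moves the stack by at most one syllable. -/
lemma stk_step (y : Fin 3 × Bool) (g) :
    stk (g * ev [y]) = stk g ∨
    (tc [y] = 1 ∧ ∃ c, stk (g * ev [y]) = c :: stk g ∨ stk g = c :: stk (g * ev [y])) := by
  refine letter_cases (P := fun y => stk (g * ev [y]) = stk g ∨
    (tc [y] = 1 ∧ ∃ c, stk (g * ev [y]) = c :: stk g ∨ stk g = c :: stk (g * ev [y])))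
    ?_ ?_ ?_ ?_ y
  · left; rw [ev_s, stk, nf_mul_s]; rfl
  · left; rw [ev_s', stk, nf_mul_s']; rfl
  · intro b
    right
    refine ⟨tc_t _ _, ?_⟩
    rw [ev_t, stk, nf_mul_t, stk]
    generalize (nf g).1 = p
    obtain ⟨L, k⟩ := p
    rcases L with _ | ⟨⟨b'⟩ | ⟨b', r⟩, L⟩
    · exact ⟨_, .inl rfl⟩
    · simp only [mulT]
      split_ifs with hc
      · exact ⟨_, .inr rfl⟩
      · exact ⟨_, .inl rfl⟩
    · exact ⟨_, .inl rfl⟩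
  · intro b
    right
    refine ⟨tc_t _ _, ?_⟩
    rw [ev_t', stk, nf_mul_t', stk]
    generalize (nf g).1 = p
    obtain ⟨L, k⟩ := p
    rcases L with _ | ⟨⟨b'⟩ | ⟨b', r⟩, L⟩
    · exact ⟨_, .inl rfl⟩
    · exact ⟨_, .inl rfl⟩
    · simp only [mulT']
      split_ifs with hc
      · exact ⟨_, .inr rfl⟩
      · exact ⟨_, .inl rfl⟩

lemma stk_length (x : Word (Fin 3)) (g) :
    (stk (g * ev x)).length ≤ (stk g).length + tc x ∧
    (stk g).length ≤ (stk (g * ev x)).length + tc x := by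
  induction x generalizing g with
  | nil => simp [ev_nil, tc]
  | cons y x ih =>
    rw [ev_cons, tc_cons, ← mul_assoc]
    have h := ih (g * ev [y])
    rcases stk_step y g with h1 | ⟨h0, c, h1 | h1⟩
    · rw [h1] at h; omega
    · rw [h1, List.length_cons] at h; omega
    · rw [h1, List.length_cons]; omega

/-- Some prefix of a word reaches a common substack of the two endpoints: in the Bass–Serre
tree, every path passes through the branch point of its endpoints. -/
lemma stk_meet (x : Word (Fin 3)) (g) : ∃ x1 x2, x = x1 ++ x2 ∧
    stk (g * ev x1) <:+ stk g ∧ stk (g * ev x1) <:+ stk (g * ev x) := by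
  induction x generalizing g with
  | nil => exact ⟨[], [], rfl, by simp [ev_nil], by simp [ev_nil]⟩
  | cons y x ih =>
    obtain ⟨x1, x2, rfl, h1, h2⟩ := ih (g * ev [y])
    have e1 : g * ev (y :: x1) = g * ev [y] * ev x1 := by rw [ev_cons, mul_assoc]
    have e2 : g * ev (y :: (x1 ++ x2)) = g * ev [y] * ev (x1 ++ x2) := by
      rw [ev_cons, mul_assoc]
    rcases stk_step y g with h | ⟨-, c, h | h⟩
    · exact ⟨y :: x1, x2, rfl, by rw [e1, ← h]; exact h1, by rw [e1, e2]; exact h2⟩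
    · rw [h, List.suffix_cons_iff] at h1
      rcases h1 with h1 | h1
      · refine ⟨[], _, rfl, by simp [ev_nil], ?_⟩
        rw [e2, ev_nil, mul_one]
        rw [h1] at h2
        exact (List.suffix_cons c _).trans h2
      · exact ⟨y :: x1, x2, rfl, by rw [e1]; exact h1, by rw [e1, e2]; exact h2⟩
    · refine ⟨y :: x1, x2, rfl, ?_, by rw [e1, e2]; exact h2⟩
      rw [e1, h]
      exact h1.trans (List.suffix_cons c _)

/-- Every substack of the stack of a word is the stack of a prefix. -/
lemma stk_substack (x : Word (Fin 3)) (M : List Syl) (hM : M <:+ stk (ev x)) :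
    ∃ x1 x2, x = x1 ++ x2 ∧ stk (ev x1) = M := by
  induction x using List.reverseRecOn with
  | nil =>
    rw [ev_nil, stk_one, List.suffix_nil] at hM
    exact ⟨[], [], rfl, by rw [ev_nil, stk_one, hM]⟩
  | append_singleton x y ih =>
    have key : M <:+ stk (ev x) → ∃ x1 x2, x ++ [y] = x1 ++ x2 ∧ stk (ev x1) = M := by
      intro h
      obtain ⟨x1, x2, rfl, h2⟩ := ih h
      exact ⟨x1, x2 ++ [y], by simp, h2⟩
    rw [ev_append] at hM
    rcases stk_step y (ev x) with h | ⟨-, c, h | h⟩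
    · rw [h] at hM; exact key hM
    · rw [h, List.suffix_cons_iff] at hM
      rcases hM with hM | hM
      · exact ⟨x ++ [y], [], by simp, by rw [ev_append, h, hM]⟩
      · exact key hM
    · exact key (by rw [h]; exact hM.trans (List.suffix_cons c _))

lemma s_word (k : ℤ) : ∃ x, ev x = sG ^ k ∧ tc x = 0 := by
  induction k using Int.induction_on with
  | zero => exact ⟨[], by simp [ev_nil], rfl⟩
  | succ k ih =>
    obtain ⟨x, h1, h2⟩ := ih
    refine ⟨x ++ [(2, true)], by rw [ev_append, h1, ev_s, zpow_add_one], ?_⟩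
    rw [tc_append, h2]; simp [tc]
  | pred k ih =>
    obtain ⟨x, h1, h2⟩ := ih
    refine ⟨x ++ [(2, false)], by rw [ev_append, h1, ev_s', zpow_sub_one], ?_⟩
    rw [tc_append, h2]; simp [tc]

lemma syl_word (c : Syl) : ∃ x, ev x = evSyl c ∧ tc x = 1 := by
  rcases c with ⟨b⟩ | ⟨b, r⟩
  · exact ⟨[(tl b, false)], ev_t' b, tc_t _ _⟩
  · obtain ⟨x, h1, h2⟩ := s_word (bit r)
    exact ⟨x ++ [(tl b, true)], by rw [ev_append, h1, ev_t]; rfl, by rw [tc_append, h2, tc_t]⟩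

lemma stack_word (L : List Syl) : ∃ x, ev x = evSt L ∧ tc x = L.length := by
  induction L with
  | nil => exact ⟨[], ev_nil, rfl⟩
  | cons c L ih =>
    obtain ⟨x, h1, h2⟩ := ih
    obtain ⟨z, h3, h4⟩ := syl_word c
    exact ⟨x ++ z, by rw [ev_append, h1, h3]; rfl, by rw [tc_append, h2, h4, List.length_cons]⟩

lemma short_word (g) : ∃ x, ev x = g ∧ tc x = (stk g).length := by
  obtain ⟨k, hk⟩ := eq_evSt g
  obtain ⟨x, h1, h2⟩ := stack_word (stk g)
  obtain ⟨z, h3, h4⟩ := s_word k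
  exact ⟨x ++ z, by rw [ev_append, h1, h3, ← hk], by rw [tc_append, h2, h4]; rfl⟩

lemma evSt_append (N M : List Syl) : evSt (N ++ M) = evSt M * evSt N := by
  induction N with
  | nil => simp [evSt]
  | cons c N ih => simp [evSt, ih, mul_assoc]

/-! ### Conjugacy in terms of cyclic permutations -/

/-- Two words representing conjugate elements have cyclic permutations that are conjugate by a
power of `s`, or both have cyclic permutations representing powers of `s`. The proof takes a
conjugator with fewest stable letters over all pairs of cyclic permutations: it is the bridge in
the Bass–Serre tree between two invariant subtrees, so if it is not a point it is fixed. -/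
lemma conj_rot (u v : Word (Fin 3)) (h : ∃ g, ev u * g = g * ev v) :
    ∃ u' v' : Word (Fin 3), u ~r u' ∧ v ~r v' ∧
      ((∃ p : ℤ, ev u' * sG ^ p = sG ^ p * ev v') ∨
        (∃ k l : ℤ, ev u' = sG ^ k ∧ ev v' = sG ^ l)) := by
  classical
  have hex : ∃ m, ∃ u' v' w : Word (Fin 3), u ~r u' ∧ v ~r v' ∧
      ev u' * ev w = ev w * ev v' ∧ tc w = m := by
    obtain ⟨g, hg⟩ := h
    obtain ⟨w, rfl⟩ := ev_surj g
    exact ⟨_, u, v, w, .refl _, .refl _, hg, rfl⟩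
  obtain ⟨u', v', w, hu, hv, hw, hm⟩ := Nat.find_spec hex
  have hmin : ∀ (u2 v2 : Word (Fin 3)) g, u ~r u2 → v ~r v2 →
      ev u2 * g = g * ev v2 → ∀ x, ev x = g → tc w ≤ tc x := by
    intro u2 v2 g h1 h2 h3 x hx
    rw [hm]
    subst hx
    exact Nat.find_min' hex ⟨u2, v2, x, h1, h2, h3, rfl⟩
  clear hm
  have hwl : (stk (ev w)).length = tc w := by
    obtain ⟨x, h1, h2⟩ := short_word (ev w)
    have h3 := hmin u' v' _ hu hv hw x h1
    have h4 := (stk_length w 1).1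
    rw [one_mul, stk_one] at h4
    simp only [List.length_nil, zero_add] at h4
    omega
  refine ⟨u', v', hu, hv, ?_⟩
  rcases Nat.eq_zero_or_pos (tc w) with h0 | hpos
  · left
    obtain ⟨k, hk⟩ := eq_evSt (ev w)
    rw [h0, List.length_eq_zero_iff] at hwl
    rw [hwl] at hk
    simp only [evSt, one_mul] at hk
    exact ⟨k, by rw [← hk]; exact hw⟩
  right
  -- the path from `w` along `v'` never drops below `w`
  have hsuf : stk (ev w) <:+ stk (ev w * ev v') := by
    obtain ⟨v1, v2, rfl, h1, h2⟩ := stk_meet v' (ev w)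
    obtain ⟨x, h3, h4⟩ := short_word (ev w * ev v1)
    have h5 := hmin u' (v2 ++ v1) _ hu (hv.trans List.isRotated_append) (by
      rw [ev_append, ← mul_assoc, hw, ev_append]; group) x h3
    have h6 : stk (ev w * ev v1) = stk (ev w) := h1.eq_of_length_le (by omega)
    rwa [h6] at h2
  obtain ⟨w1, w2, hw12, h1, h2⟩ := stk_meet w (ev u')
  rw [hw] at h2
  have hM : stk (ev u' * ev w1) = [] := by
    by_contra hne
    obtain ⟨M, y, hMy⟩ := (List.eq_nil_or_concat' _).resolve_left hne
    rw [hMy] at h1 h2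
    have hy1 : [y] <:+ stk (ev u') := (List.suffix_append _ _).trans h1
    have hy2 : [y] <:+ stk (ev w * ev v') := (List.suffix_append _ _).trans h2
    have hy3 : [y] <:+ stk (ev w) :=
      List.suffix_of_suffix_length_le hy2 hsuf (by simp; omega)
    obtain ⟨u1, u2, rfl, hu1⟩ := stk_substack _ _ hy1
    obtain ⟨N, hN⟩ := hy3
    obtain ⟨k, hk⟩ := eq_evSt (ev u1)
    obtain ⟨k', hk'⟩ := eq_evSt (ev w)
    rw [hu1] at hk
    rw [← hN, evSt_append] at hk'
    obtain ⟨x, hx1, hx2⟩ := stack_word N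
    obtain ⟨z, hz1, hz2⟩ := s_word (-k)
    obtain ⟨z', hz1', hz2'⟩ := s_word k'
    have := hmin (u2 ++ u1) v' ((ev u1)⁻¹ * ev w) (hu.trans List.isRotated_append) hv (by
      rw [mul_assoc, ← hw, ev_append, ev_append]; group) (z ++ x ++ z') (by
      rw [ev_append, ev_append, hx1, hz1, hz1', hk, hk']; group)
    rw [tc_append, tc_append, hx2, hz2, hz2'] at this
    have h7 := congrArg List.length hN
    simp at h7
    omega
  have h3 := (stk_length w1 (ev u')).2
  have h4 := (stk_length w2 (ev u' * ev w1)).1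
  rw [mul_assoc, ← ev_append, ← hw12, hw] at h4
  rw [hM] at h3 h4
  have h5 := hsuf.length_le
  have h6 := tc_append w1 w2
  rw [← hw12] at h6
  simp only [List.length_nil, zero_add] at h3 h4
  have hu0 : stk (ev u') = [] := List.length_eq_zero_iff.1 (by omega)
  have hv0 : stk (ev w) = stk (ev w * ev v') := hsuf.eq_of_length_le (by omega)
  obtain ⟨k, hk⟩ := eq_evSt (ev u')
  obtain ⟨i, hi⟩ := eq_evSt (ev w)
  obtain ⟨j, hj⟩ := eq_evSt (ev w * ev v')
  refine ⟨k, j - i, by rw [hk, hu0]; simp [evSt], ?_⟩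
  rw [← hv0] at hj
  have : ev v' = (ev w)⁻¹ * (ev w * ev v') := by group
  have h8 : evSt (stk (ev w)) = ev w * sG ^ (-i) := by
    conv_rhs => rw [hi]
    group
  rw [this, hj, h8, zpow_sub]; group

/-! ### The affine action -/

/-- The action of the generators on `ℚ`: `a` and `d` double, `s` translates by `1`. This factors
through the usual affine representation of `BS(1,2)`. -/
def genAff (i : Fin 3) : Equiv.Perm ℚ :=
  if i = 2 then Equiv.addRight 1 else Equiv.mulRight₀ 2 two_ne_zero

/-- The affine action of `B` on `ℚ`. -/
def aff : PresentedGroup bRels →* Equiv.Perm ℚ :=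
  PresentedGroup.toGroup (f := genAff) (by
    rintro r (rfl | rfl) <;>
    · simp only [map_mul, map_inv, map_pow, FreeGroup.lift_apply_of]
      rw [mul_inv_eq_one, mul_inv_eq_iff_eq_mul]
      ext x
      simp [genAff, pow_two]
      ring)

lemma aff_s (x : ℚ) : aff sG x = x + 1 := by
  simp [aff, sG, genAff]

lemma aff_t (b : Bool) (x : ℚ) : aff (tG b) x = 2 * x := by
  cases b <;> simp [aff, tG, genAff, tl, mul_comm]

lemma aff_s' (x : ℚ) : aff sG⁻¹ x = x - 1 := by
  rw [map_inv, Equiv.Perm.inv_eq_iff_eq, aff_s]; ring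

lemma aff_t' (b : Bool) (x : ℚ) : aff (tG b)⁻¹ x = x / 2 := by
  rw [map_inv, Equiv.Perm.inv_eq_iff_eq, aff_t]; ring

lemma aff_zpow (k : ℤ) (x : ℚ) : aff (sG ^ k) x = x + k := by
  induction k using Int.induction_on generalizing x with
  | zero => simp
  | succ k ih =>
    rw [zpow_add_one, map_mul, Equiv.Perm.mul_apply, aff_s, ih]; push_cast; ring
  | pred k ih =>
    rw [zpow_sub_one, map_mul, Equiv.Perm.mul_apply, aff_s', ih]; push_cast; ring

lemma pow_t (b : Bool) (N : ℕ) : sG ^ (2 ^ (N + 1)) * tG b = tG b * sG ^ (2 ^ N) := by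
  have h := tG_zpow b (2 ^ N)
  have e : (2 : ℤ) * 2 ^ N = ((2 ^ (N + 1) : ℕ) : ℤ) := by push_cast; ring
  have e2 : (2 : ℤ) ^ N = ((2 ^ N : ℕ) : ℤ) := by push_cast; ring
  rw [e, e2, zpow_natCast, zpow_natCast] at h
  exact h.symm

/-- A word of length at most `n` acts on `ℚ` by `x ↦ 2 ^ h * x + c` with `|c| ≤ 2 ^ n`, and large
powers of two in the exponent of `s` pass through it, being divided by `2 ^ h`. -/
lemma word_aff (u : Word (Fin 3)) : ∃ (h : ℤ) (c : ℚ), |c| ≤ 2 ^ u.length ∧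
    (∀ x, aff (ev u) x = 2 ^ h * x + c) ∧
    ∀ N : ℕ, u.length ≤ N → ∃ M : ℕ, (M : ℤ) = N - h ∧
      sG ^ (2 ^ N) * ev u = ev u * sG ^ (2 ^ M) := by
  induction u with
  | nil =>
    exact ⟨0, 0, by simp, by simp [ev_nil], fun N _ => ⟨N, by simp, by simp [ev_nil]⟩⟩
  | cons y u ih =>
    obtain ⟨h, c, hc, hx, hN⟩ := ih
    have one_le : (1 : ℚ) ≤ 2 ^ u.length := one_le_pow₀ (by norm_num)
    obtain ⟨hc1, hc2⟩ := abs_le.1 hc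
    rw [ev_cons]
    simp only [List.length_cons, pow_succ, map_mul, Equiv.Perm.mul_apply]
    refine letter_cases (P := fun y => ∃ (h : ℤ) (c : ℚ), |c| ≤ 2 ^ u.length * 2 ∧
      (∀ x, aff (ev [y]) (aff (ev u) x) = 2 ^ h * x + c) ∧
      ∀ N : ℕ, u.length + 1 ≤ N → ∃ M : ℕ, (M : ℤ) = N - h ∧
      sG ^ (2 ^ N) * (ev [y] * ev u) = (ev [y] * ev u) * sG ^ (2 ^ M)) ?_ ?_ ?_ ?_ y
    · refine ⟨h, c + 1, abs_le.2 ⟨by linarith, by linarith⟩, fun x => ?_, fun N h1 => ?_⟩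
      · rw [ev_s, aff_s, hx]; ring
      · obtain ⟨M, hM, e⟩ := hN N (by omega)
        refine ⟨M, hM, ?_⟩
        rw [ev_s, ← mul_assoc, ← pow_succ, pow_succ', mul_assoc, e, mul_assoc]
    · refine ⟨h, c - 1, abs_le.2 ⟨by linarith, by linarith⟩, fun x => ?_, fun N h1 => ?_⟩
      · rw [ev_s', aff_s', hx]; ring
      · obtain ⟨M, hM, e⟩ := hN N (by omega)
        refine ⟨M, hM, ?_⟩
        have hcomm : Commute (sG ^ (2 ^ N)) sG⁻¹ := ((Commute.refl sG).pow_left _).inv_right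
        rw [ev_s', ← mul_assoc, hcomm.eq, mul_assoc, e, mul_assoc]
    · intro b
      refine ⟨h + 1, 2 * c, abs_le.2 ⟨by linarith, by linarith⟩, fun x => ?_, fun N h1 => ?_⟩
      · rw [ev_t, aff_t, hx, zpow_add_one₀ two_ne_zero]; ring
      · obtain ⟨N, rfl⟩ : ∃ N', N = N' + 1 := ⟨N - 1, by omega⟩
        obtain ⟨M, hM, e⟩ := hN N (by omega)
        refine ⟨M, by push_cast; linarith, ?_⟩
        rw [ev_t, ← mul_assoc, pow_t, mul_assoc, e, mul_assoc]
    · intro b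
      refine ⟨h - 1, c / 2, abs_le.2 ⟨by linarith, by linarith⟩, fun x => ?_, fun N h1 => ?_⟩
      · rw [ev_t', aff_t', hx, zpow_sub_one₀ two_ne_zero]; ring
      · obtain ⟨M, hM, e⟩ := hN (N + 1) (by omega)
        refine ⟨M, by push_cast at hM; linarith, ?_⟩
        have : sG ^ (2 ^ N) * (tG b)⁻¹ = (tG b)⁻¹ * sG ^ (2 ^ (N + 1)) := by
          rw [mul_inv_eq_iff_eq_mul, mul_assoc, pow_t, inv_mul_cancel_left]
        rw [ev_t', ← mul_assoc, this, mul_assoc, e, mul_assoc]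

/-! ### Short conjugators -/

/-- Exponential distortion of `⟨s⟩`. -/
lemma short_s (N : ℕ) (p : ℤ) (hp : |p| ≤ 2 ^ N) :
    ∃ x : Word (Fin 3), ev x = sG ^ p ∧ x.length ≤ 3 * N + 1 := by
  induction N generalizing p with
  | zero =>
    obtain ⟨h1, h2⟩ := abs_le.1 hp
    simp only [pow_zero] at h1 h2
    have : p = -1 ∨ p = 0 ∨ p = 1 := by omega
    rcases this with rfl | rfl | rfl
    · exact ⟨[(2, false)], by rw [ev_s']; simp, by simp⟩
    · exact ⟨[], by rw [ev_nil]; simp, by simp⟩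
    · exact ⟨[(2, true)], by rw [ev_s]; simp, by simp⟩
  | succ N ih =>
    obtain ⟨h1, h2⟩ := abs_le.1 hp
    rw [pow_succ] at h1 h2
    obtain ⟨x, hx, hl⟩ := ih (p / 2) (abs_le.2 ⟨by omega, by omega⟩)
    have hT : ev ((tl true, true) :: (x ++ [(tl true, false)])) = sG ^ (2 * (p / 2)) := by
      rw [ev_cons, ev_append, ev_t, ev_t', hx, ← mul_assoc, tG_zpow, mul_inv_cancel_right]
    rcases Int.emod_two_eq_zero_or_one p with h | h
    · refine ⟨(tl true, true) :: (x ++ [(tl true, false)]), ?_, by simp; omega⟩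
      rw [hT]; congr 1; omega
    · refine ⟨(tl true, true) :: (x ++ [(tl true, false)]) ++ [(2, true)], ?_, by simp; omega⟩
      rw [ev_append, hT, ev_s, ← zpow_add_one]; congr 1; omega

lemma rot_conj {u u' : Word (Fin 3)} (h : u ~r u') :
    ∃ x : Word (Fin 3), x.length ≤ u.length ∧ ev u * ev x = ev x * ev u' := by
  obtain ⟨n, hn, rfl⟩ := List.isRotated_iff_mod.1 h
  refine ⟨u.take n, by simp, ?_⟩
  rw [List.rotate_eq_drop_append_take hn, ev_append, ← mul_assoc, ← ev_append (u.take n),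
    List.take_append_drop]

/-- Conjugacy of short words by a power of `s` is realised by a power with exponentially bounded
exponent. If the words act on `ℚ` with slope `≠ 1` the exponent is determined by the translation
parts; otherwise `s ^ 2 ^ n` centralises them, and the exponent may be reduced modulo `2 ^ n`. -/
lemma bound_p (n : ℕ) (u v : Word (Fin 3)) (hu : u.length ≤ n) (hv : v.length ≤ n) (p : ℤ)
    (hp : ev u * sG ^ p = sG ^ p * ev v) :
    ∃ q : ℤ, |q| ≤ 2 ^ (n + 2) ∧ ev u * sG ^ q = sG ^ q * ev v := by
  obtain ⟨h, c, hc, hx, -⟩ := word_aff u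
  obtain ⟨h', c', hc', hx', hN⟩ := word_aff v
  have key : ∀ x : ℚ, 2 ^ h * (x + p) + c = 2 ^ h' * x + c' + p := by
    intro x
    have := congrArg (fun g => aff g x) hp
    simpa only [map_mul, Equiv.Perm.mul_apply, aff_zpow, hx, hx'] using this
  have k0 := key 0
  have k1 := key 1
  have hh : (2 : ℚ) ^ h = 2 ^ h' := by linarith
  have hcn : |c| ≤ 2 ^ n := hc.trans (pow_le_pow_right₀ (by norm_num) hu)
  have hcn' : |c'| ≤ 2 ^ n := hc'.trans (pow_le_pow_right₀ (by norm_num) hv)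
  by_cases h0 : h' = 0
  · obtain ⟨M, hM, e⟩ := hN n hv
    have hMn : M = n := by omega
    rw [hMn] at e
    refine ⟨p % 2 ^ n, ?_, ?_⟩
    · rw [abs_of_nonneg (Int.emod_nonneg _ (by positivity))]
      have := Int.emod_lt_of_pos p (show (0 : ℤ) < 2 ^ n by positivity)
      exact this.le.trans (pow_le_pow_right₀ (by norm_num) (by omega))
    · have hcm : Commute (sG ^ ((2 : ℤ) ^ n)) (ev v) := by
        have e2 : (2 : ℤ) ^ n = ((2 ^ n : ℕ) : ℤ) := by push_cast; ring
        rw [e2, zpow_natCast]; exact e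
      have hcm2 : Commute (sG ^ (-((2 : ℤ) ^ n * (p / 2 ^ n)))) (ev v) := by
        rw [← mul_neg, zpow_mul]; exact hcm.zpow_left _
      have hq : p % 2 ^ n = p + -((2 : ℤ) ^ n * (p / 2 ^ n)) := by
        rw [Int.emod_def]; ring
      rw [hq, zpow_add, ← mul_assoc, hp, mul_assoc, mul_assoc, hcm2.eq]
  · refine ⟨p, ?_, hp⟩
    have hslope : (1 : ℚ) / 2 ≤ |2 ^ h' - 1| := by
      rcases lt_or_gt_of_ne h0 with hlt | hgt
      · have : (2 : ℚ) ^ h' ≤ 2 ^ (-1 : ℤ) := zpow_le_zpow_right₀ (by norm_num) (by omega)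
        rw [abs_of_nonpos] <;> norm_num at this ⊢ <;> linarith
      · have : (2 : ℚ) ^ (1 : ℤ) ≤ 2 ^ h' := zpow_le_zpow_right₀ (by norm_num) (by omega)
        rw [zpow_one] at this
        rw [abs_of_nonneg] <;> linarith
    have e : (2 ^ h' - 1) * (p : ℚ) = c' - c := by rw [hh] at k0; linarith
    have e2 : |(2 : ℚ) ^ h' - 1| * |(p : ℚ)| ≤ 2 ^ n + 2 ^ n := by
      rw [← abs_mul, e]; exact (abs_sub _ _).trans (by linarith)
    have e3 : |(p : ℚ)| ≤ 2 ^ (n + 2) := by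
      rw [pow_add]
      nlinarith [abs_nonneg (p : ℚ)]
    exact_mod_cast e3

lemma tG_pow (b : Bool) (j : ℕ) (k : ℤ) : tG b ^ j * sG ^ k = sG ^ (2 ^ j * k) * tG b ^ j := by
  induction j generalizing k with
  | zero => simp
  | succ j ih =>
    rw [pow_succ, mul_assoc, tG_zpow, ← mul_assoc, ih, mul_assoc]
    congr 2; ring

lemma t_word (j : ℕ) : ∃ x : Word (Fin 3), ev x = tG true ^ j ∧ x.length = j := by
  induction j with
  | zero => exact ⟨[], by rw [ev_nil]; simp, rfl⟩
  | succ j ih =>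
    obtain ⟨x, h1, h2⟩ := ih
    exact ⟨x ++ [(tl true, true)], by rw [ev_append, h1, ev_t, pow_succ], by simp [h2]⟩

lemma t_conj (n j : ℕ) (k l : ℤ) (hk : k ≠ 0) (hl : |l| ≤ 2 ^ n) (h : l = 2 ^ j * k) :
    ∃ x : Word (Fin 3), x.length ≤ n ∧ ev x * sG ^ k = sG ^ l * ev x := by
  obtain ⟨x, h1, h2⟩ := t_word j
  refine ⟨x, ?_, by rw [h1, tG_pow, h]⟩
  rw [h2]
  rw [h, abs_mul, abs_of_nonneg (by positivity : (0 : ℤ) ≤ 2 ^ j)] at hl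
  have : (1 : ℤ) ≤ |k| := Int.one_le_abs hk
  have h3 : (2 : ℤ) ^ j ≤ 2 ^ n := by nlinarith [pow_pos (two_pos : (0 : ℤ) < 2) j]
  exact (pow_le_pow_iff_right₀ (by norm_num)).1 h3

/-- Two conjugate powers of `s` represented by short words are conjugate by a short power
of `a`. -/
lemma bound_ell (n : ℕ) (u v : Word (Fin 3)) (hu : u.length ≤ n) (hv : v.length ≤ n) (k l : ℤ)
    (hk : ev u = sG ^ k) (hl : ev v = sG ^ l) (hc : ∃ g, ev u * g = g * ev v) :
    ∃ x : Word (Fin 3), x.length ≤ n ∧ ev u * ev x = ev x * ev v := by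
  have bd : ∀ (u : Word (Fin 3)) (k : ℤ), u.length ≤ n → ev u = sG ^ k → |k| ≤ 2 ^ n := by
    intro u k hu hk
    obtain ⟨h, c, hc, hx, -⟩ := word_aff u
    have := hx 0
    rw [hk, aff_zpow] at this
    have e : (k : ℚ) = c := by linarith
    rw [← e] at hc
    have : |(k : ℚ)| ≤ 2 ^ n := hc.trans (pow_le_pow_right₀ (by norm_num) hu)
    exact_mod_cast this
  have bk := bd u k hu hk
  have bl := bd v l hv hl
  obtain ⟨g, hg⟩ := hc
  obtain ⟨w, rfl⟩ := ev_surj g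
  obtain ⟨h, c, -, hx, -⟩ := word_aff w
  rw [hk, hl] at hg ⊢
  have e := congrArg (fun g => aff g 0) hg
  simp only [map_mul, Equiv.Perm.mul_apply, aff_zpow, hx] at e
  have e2 : (k : ℚ) = 2 ^ h * l := by linarith
  by_cases hl0 : l = 0
  · have hk0 : k = 0 := by subst hl0; simpa using e2
    exact ⟨[], by simp, by simp [hl0, hk0]⟩
  obtain ⟨j, rfl | rfl⟩ := h.eq_nat_or_neg
  · obtain ⟨x, h1, h2⟩ := t_conj n j l k hl0 bk (by rw [zpow_natCast] at e2; exact_mod_cast e2)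
    exact ⟨x, h1, h2.symm⟩
  · have e3 : (l : ℚ) = 2 ^ j * k := by
      rw [e2, zpow_neg, zpow_natCast, mul_inv_cancel_left₀ (by positivity)]
    have hk0 : k ≠ 0 := by
      rintro rfl
      apply hl0
      simpa using e3
    obtain ⟨x, h1, h2⟩ := t_conj n j k l hk0 bl (by exact_mod_cast e3)
    refine ⟨FreeGroup.invRev x, by simpa using h1, ?_⟩
    rw [ev_inv, eq_inv_mul_iff_mul_eq, ← mul_assoc, h2, mul_inv_cancel_right]

/-- **Linear bound on the conjugator length function of `B`.** `CL_B(n) ≼ n`: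
there is `C > 0` such that whenever words `u`, `v` with `|u| + |v| ≤ n` represent
conjugate elements of `B`, some word `w` with `|w| ≤ C·n + C` satisfies `wuw⁻¹ = v`
in `B`. -/
theorem b_cl_linear :
    ∃ C : ℕ, 0 < C ∧ ∀ n : ℕ, ∀ u v : Word (Fin 3),
      u.length + v.length ≤ n →
      IsConj (proj bRels (FreeGroup.mk u)) (proj bRels (FreeGroup.mk v)) →
      ∃ w : Word (Fin 3), w.length ≤ C * n + C ∧
        proj bRels (FreeGroup.mk w) * proj bRels (FreeGroup.mk u) *
          (proj bRels (FreeGroup.mk w))⁻¹ = proj bRels (FreeGroup.mk v) := by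
  refine ⟨10, by norm_num, fun n u v hn hconj => ?_⟩
  obtain ⟨g, hg⟩ := isConj_iff.1 hconj
  have hg' : ∃ g, ev u * g = g * ev v :=
    ⟨g⁻¹, by rw [eq_inv_mul_iff_mul_eq, ← mul_assoc]; exact hg⟩
  obtain ⟨u', v', hu, hv, hcase⟩ := conj_rot u v hg'
  obtain ⟨x, hx1, hx2⟩ := rot_conj hu
  obtain ⟨z, hz1, hz2⟩ := rot_conj hv
  have lu : u'.length ≤ n := by rw [← hu.perm.length_eq]; omega
  have lv : v'.length ≤ n := by rw [← hv.perm.length_eq]; omega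
  obtain ⟨y, hy1, hy2⟩ : ∃ y : Word (Fin 3), y.length ≤ 3 * (n + 2) + 1 ∧
      ev u' * ev y = ev y * ev v' := by
    rcases hcase with ⟨p, hp⟩ | ⟨k, l, hk, hl⟩
    · obtain ⟨q, hq, hq2⟩ := bound_p n u' v' lu lv p hp
      obtain ⟨y, hy1, hy2⟩ := short_s (n + 2) q hq
      exact ⟨y, hy2, by rw [hy1, hq2]⟩
    · obtain ⟨g, hg⟩ := hg'
      obtain ⟨y, hy1, hy2⟩ := bound_ell n u' v' lu lv k l hk hl ⟨(ev x)⁻¹ * g * ev z, by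
        calc ev u' * ((ev x)⁻¹ * g * ev z)
            = (ev x)⁻¹ * (ev x * ev u') * (ev x)⁻¹ * g * ev z := by group
          _ = (ev x)⁻¹ * (ev u * g) * ev z := by rw [← hx2]; group
          _ = (ev x)⁻¹ * g * (ev v * ev z) := by rw [hg]; group
          _ = (ev x)⁻¹ * g * ev z * ev v' := by rw [hz2]; group⟩
      exact ⟨y, by omega, hy2⟩
  refine ⟨FreeGroup.invRev (x ++ y ++ FreeGroup.invRev z), ?_, ?_⟩
  · simp only [FreeGroup.invRev_length, List.length_append]
    omega
  · show ev _ * ev u * (ev _)⁻¹ = ev v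
    have key : ev u * (ev x * ev y * (ev z)⁻¹) = ev x * ev y * (ev z)⁻¹ * ev v := by
      calc ev u * (ev x * ev y * (ev z)⁻¹)
          = (ev u * ev x) * ev y * (ev z)⁻¹ := by group
        _ = ev x * (ev u' * ev y) * (ev z)⁻¹ := by rw [hx2]; group
        _ = ev x * ev y * (ev z)⁻¹ * (ev z * ev v') * (ev z)⁻¹ := by rw [hy2]; group
        _ = ev x * ev y * (ev z)⁻¹ * ev v := by rw [← hz2]; group
    rw [ev_inv, ev_append, ev_append, ev_inv, inv_inv, mul_assoc, key, inv_mul_cancel_left]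

end AnnDehn
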